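/- arXiv:2401.03820 — 2 statements merged into one kernel-verified Lean document; each statement's English description precedes it below -/
import Mathlib

section
/- Let Σ₁ = λU₁U₁ᵀ + σ²I_p and Σ₂ = λU₂U₂ᵀ + σ²I_p with U₁, U₂ ∈ O_{p,r} and ‖U₁U₁ᵀ − U₂U₂ᵀ‖_F ≤ ε₀. Then KL(N(0,Σ₁) ‖ N(0,Σ₂)) ≤ (1/2)·(λ²/(σ²(σ²+λ)))·ε₀², and consequently by Pinsker's inequality TV(N(0,Σ₁), N(0,Σ₂)) ≤ (ε₀/2)·√(λ²/(σ²(σ²+λ))). -/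
open Matrix MeasureTheory

/-- The density of the centered multivariate Gaussian `N(0, S)` (for `S` positive
definite) with respect to Lebesgue measure on `ℝ^p`. -/
noncomputable def gaussianDensity {p : ℕ} (S : Matrix (Fin p) (Fin p) ℝ)
    (x : EuclideanSpace ℝ (Fin p)) : ℝ :=
  ((2 * Real.pi) ^ p * S.det) ^ (-(1 : ℝ) / 2) *
    Real.exp (-(1 / 2) * ((fun i => x i) ⬝ᵥ S⁻¹.mulVec fun i => x i))

/-- The centered multivariate Gaussian measure `N(0, S)` on `ℝ^p`. -/
noncomputable def gaussianMeasure {p : ℕ} (S : Matrix (Fin p) (Fin p) ℝ) :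
    Measure (EuclideanSpace ℝ (Fin p)) :=
  volume.withDensity fun x => ENNReal.ofReal (gaussianDensity S x)

/-- The Kullback–Leibler divergence `KL(P‖Q) = ∫ log(dP/dQ) dP`. -/
noncomputable def klDiv {α : Type*} [MeasurableSpace α] (P Q : Measure α) : ℝ :=
  ∫ x, Real.log (P.rnDeriv Q x).toReal ∂P

/-- Total variation distance `TV(P, Q) = sup_E |P(E) − Q(E)|` over measurable sets. -/
noncomputable def tvDist {α : Type*} [MeasurableSpace α] (P Q : Measure α) : ℝ :=
  ⨆ E : {s : Set α // MeasurableSet s}, |(P E).toReal - (Q E).toReal|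

/-- The Frobenius norm of a real matrix. -/
noncomputable def frobNorm {m n : ℕ} (A : Matrix (Fin m) (Fin n) ℝ) : ℝ :=
  Real.sqrt (∑ i, ∑ j, (A i j) ^ 2)

open ProbabilityTheory

/-!
The two spiked covariances have the same determinant, so the log-likelihood ratio of the two
Gaussians is half the quadratic form of `Σ₂⁻¹ - Σ₁⁻¹`, and its mean under `N(0, Σ₁)` is half of
`tr (Σ₂⁻¹ Σ₁) - p`. Since `U Uᵀ` is a projection of rank `r`, both `Σ₂⁻¹` and
`‖U₁U₁ᵀ - U₂U₂ᵀ‖_F²` are affine in the projections, and comparing the two traces gives the exact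
value `KL = λ² / (4 σ² (σ² + λ)) ‖U₁U₁ᵀ - U₂U₂ᵀ‖_F²`.

Pinsker's inequality comes from the Donsker–Varadhan bound `P[f] ≤ KL(P‖Q) + log Q[exp f]`, applied
to `f = t (1_E - Q(E))`, whose exponential moment under `Q` is at most `exp (t² / 8)` by
Hoeffding's lemma.
-/

section Pinsker

variable {α : Type*} [MeasurableSpace α] {P Q : Measure α} [IsProbabilityMeasure P]
  [IsProbabilityMeasure Q] {f : α → ℝ}

lemma klDiv_nonneg (hPQ : P ≪ Q) : 0 ≤ klDiv P Q := by
  have h := InformationTheory.toReal_klDiv_of_measure_eq (μ := P) (ν := Q) hPQ (by simp)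
  exact ENNReal.toReal_nonneg.trans_eq h

lemma integral_le_klDiv_add_log_integral_exp (hPQ : P ≪ Q) (hllr : Integrable (llr P Q) P)
    (hfP : Integrable f P) (hfQ : Integrable (fun x ↦ Real.exp (f x)) Q) :
    ∫ x, f x ∂P ≤ klDiv P Q + Real.log (∫ x, Real.exp (f x) ∂Q) := by
  have := isProbabilityMeasure_tilted hfQ
  have h_nonneg : 0 ≤ ∫ x, llr P (Q.tilted f) x ∂P :=
    klDiv_nonneg (hPQ.trans (absolutelyContinuous_tilted hfQ))
  have h_tilted := integral_llr_tilted_right hPQ hfP hfQ hllr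
  have h_klDiv : klDiv P Q = ∫ x, llr P Q x ∂P := rfl
  linarith

lemma two_mul_sq_integral_sub_integral_le_klDiv {a b : ℝ} (hPQ : P ≪ Q)
    (hllr : Integrable (llr P Q) P) (hf : AEMeasurable f Q)
    (hfab : ∀ᵐ x ∂Q, f x ∈ Set.Icc a b) :
    2 * (∫ x, f x ∂P - ∫ x, f x ∂Q) ^ 2 ≤ (b - a) ^ 2 * klDiv P Q := by
  set d := ∫ x, f x ∂P - ∫ x, f x ∂Q
  have hfP : Integrable f P :=
    .of_mem_Icc a b (hf.mono_ac hPQ) (hPQ.ae_le hfab)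
  have hsub := hasSubgaussianMGF_of_mem_Icc hf hfab
  have h_tilt (t : ℝ) : t * d ≤ klDiv P Q + (b - a) ^ 2 / 8 * t ^ 2 := by
    calc t * d = ∫ x, t * (f x - ∫ y, f y ∂Q) ∂P := by
          rw [integral_const_mul, integral_sub hfP (integrable_const _), integral_const,
            probReal_univ, one_smul]
      _ ≤ klDiv P Q + cgf (fun x ↦ f x - ∫ y, f y ∂Q) Q t :=
          integral_le_klDiv_add_log_integral_exp hPQ hllr
            ((hfP.sub (integrable_const _)).const_mul t) (hsub.integrable_exp_mul t)
      _ ≤ klDiv P Q + (b - a) ^ 2 / 8 * t ^ 2 := by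
          have := hsub.cgf_le t
          simp only [NNReal.coe_pow, NNReal.coe_div, coe_nnnorm, Real.norm_eq_abs, div_pow,
            sq_abs, NNReal.coe_ofNat] at this
          linarith
  -- Optimising `h_tilt` over `t` is the nonpositivity of a discriminant.
  have h_discrim := discrim_le_zero (a := (b - a) ^ 2 / 8) (b := -d) (c := klDiv P Q)
    fun t ↦ by linarith [h_tilt t]
  rw [discrim] at h_discrim
  linarith

theorem tvDist_le_sqrt_half_klDiv (hPQ : P ≪ Q) (hllr : Integrable (llr P Q) P) :
    tvDist P Q ≤ √(klDiv P Q / 2) := by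
  have : Nonempty {s : Set α // MeasurableSet s} := ⟨⟨∅, .empty⟩⟩
  refine ciSup_le fun ⟨E, hE⟩ ↦ Real.abs_le_sqrt ?_
  have h := two_mul_sq_integral_sub_integral_le_klDiv (f := E.indicator 1) (a := 0) (b := 1)
    hPQ hllr (by fun_prop (disch := exact hE))
    (ae_of_all _ fun x ↦ by by_cases hx : x ∈ E <;> simp [hx])
  simp only [integral_indicator_one hE, Measure.real] at h
  linarith

end Pinsker

section WithDensity

variable {α β : Type*} [MeasurableSpace α] [MeasurableSpace β]

lemma map_withDensity_comp {μ : Measure α} {f : α → β} (hf : Measurable f) {g : β → ENNReal}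
    (hg : Measurable g) : (μ.withDensity (g ∘ f)).map f = (μ.map f).withDensity g := by
  ext s hs
  rw [Measure.map_apply hf hs, withDensity_apply _ (hf hs), withDensity_apply _ hs,
    setLIntegral_map hs hg hf]
  rfl

lemma llr_withDensity_ofReal {μ : Measure α} [SigmaFinite μ] {f g : α → ℝ} (hf : Measurable f)
    (hg : Measurable g) (hf0 : ∀ x, 0 < f x) (hg0 : ∀ x, 0 < g x) :
    llr (μ.withDensity fun x ↦ ENNReal.ofReal (f x)) (μ.withDensity fun x ↦ ENNReal.ofReal (g x))
      =ᵐ[μ] fun x ↦ Real.log (f x) - Real.log (g x) := by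
  have hgμ := Measure.rnDeriv_withDensity_right (μ.withDensity fun x ↦ ENNReal.ofReal (f x)) μ
    hg.ennreal_ofReal.aemeasurable (ae_of_all _ fun x ↦ by simp [hg0 x])
    (ae_of_all _ fun x ↦ ENNReal.ofReal_ne_top)
  filter_upwards [hgμ, Measure.rnDeriv_withDensity μ hf.ennreal_ofReal] with x hgx hfx
  rw [llr, hgx, hfx, ENNReal.toReal_mul, ENNReal.toReal_inv, ENNReal.toReal_ofReal (hf0 x).le,
    ENNReal.toReal_ofReal (hg0 x).le, Real.log_mul (inv_pos.2 (hg0 x)).ne' (hf0 x).ne',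
    Real.log_inv]
  ring

end WithDensity

section StdGaussianDensity

variable {E : Type*} [NormedAddCommGroup E] [InnerProductSpace ℝ E] [FiniteDimensional ℝ E]
  [MeasurableSpace E] [BorelSpace E]

lemma integrable_exp_neg_sq_norm_div_two :
    Integrable fun x : E ↦ Real.exp (-‖x‖ ^ 2 / 2) := by
  have h_integral : ∫ x : E, Real.exp (-(1 / 2) * ‖x‖ ^ 2) ≠ 0 := by
    rw [GaussianFourier.integral_rexp_neg_mul_sq_norm (by norm_num)]
    positivity
  refine (Integrable.of_integral_ne_zero h_integral).congr (ae_of_all _ fun x ↦ ?_)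
  ring_nf

open Complex in
lemma integral_exp_neg_sq_norm_mul_cexp_inner (t : E) :
    ∫ x : E, (Real.exp (-‖x‖ ^ 2 / 2) : ℂ) * cexp (inner ℝ x t * I) =
      ((2 * Real.pi) ^ (Module.finrank ℝ E / 2 : ℝ) : ℝ) * cexp (-‖t‖ ^ 2 / 2) := by
  have h_fourier := GaussianFourier.integral_cexp_neg_mul_sq_norm_add (b := 1 / 2) (by norm_num) I t
  calc ∫ x : E, (Real.exp (-‖x‖ ^ 2 / 2) : ℂ) * cexp (inner ℝ x t * I)
      = ∫ x : E, cexp (-(1 / 2) * ‖x‖ ^ 2 + I * inner ℝ t x) := by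
        congr 1 with x
        rw [ofReal_exp, ← Complex.exp_add, real_inner_comm]
        push_cast
        ring_nf
    _ = ((2 * Real.pi) ^ (Module.finrank ℝ E / 2 : ℝ) : ℝ) * cexp (-‖t‖ ^ 2 / 2) := by
        rw [h_fourier, I_sq, ofReal_cpow (by positivity)]
        push_cast
        ring_nf

lemma stdGaussian_eq_withDensity :
    stdGaussian E = volume.withDensity fun x : E ↦ ENNReal.ofReal
      ((2 * Real.pi) ^ (-(Module.finrank ℝ E : ℝ) / 2) * Real.exp (-‖x‖ ^ 2 / 2)) := by
  have := isFiniteMeasure_withDensity_ofReal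
    ((integrable_exp_neg_sq_norm_div_two (E := E)).const_mul
      ((2 * Real.pi) ^ (-(Module.finrank ℝ E : ℝ) / 2))).2
  refine Measure.ext_of_charFun (funext fun t ↦ ?_)
  rw [charFun_stdGaussian, charFun_apply,
    integral_withDensity_eq_integral_toReal_smul (by fun_prop) (by simp)]
  have h_smul (x : E) : (ENNReal.ofReal ((2 * Real.pi) ^ (-(Module.finrank ℝ E : ℝ) / 2) *
      Real.exp (-‖x‖ ^ 2 / 2))).toReal • Complex.exp (inner ℝ x t * Complex.I) =
      ((2 * Real.pi) ^ (-(Module.finrank ℝ E : ℝ) / 2) : ℝ) *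
        (Real.exp (-‖x‖ ^ 2 / 2) * Complex.exp (inner ℝ x t * Complex.I)) := by
    rw [ENNReal.toReal_ofReal (by positivity), Complex.real_smul, Complex.ofReal_mul, mul_assoc]
  simp_rw [h_smul]
  rw [integral_const_mul, integral_exp_neg_sq_norm_mul_cexp_inner, ← mul_assoc,
    ← Complex.ofReal_mul, ← Real.rpow_add (by positivity)]
  simp [neg_div]

end StdGaussianDensity

section QuadraticForm

variable {ι : Type*} [Fintype ι]

lemma dotProduct_mulVec_self_eq_sum (A : Matrix ι ι ℝ) (x : ι → ℝ) :
    x ⬝ᵥ A *ᵥ x = ∑ i, ∑ j, A i j * (x i * x j) := by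
  simp only [dotProduct, mulVec, Finset.mul_sum]
  exact Finset.sum_congr rfl fun i _ ↦ Finset.sum_congr rfl fun j _ ↦ by ring

variable [DecidableEq ι] {μ : EuclideanSpace ℝ ι} {S : Matrix ι ι ℝ}

lemma memLp_eval_multivariateGaussian (i : ι) :
    MemLp (fun x : EuclideanSpace ℝ ι ↦ x i) 2 (multivariateGaussian μ S) :=
  IsGaussian.memLp_dual _ (EuclideanSpace.proj i) 2 (by simp)

lemma integral_eval_multivariateGaussian (i : ι) :
    ∫ x : EuclideanSpace ℝ ι, x i ∂(multivariateGaussian μ S) = μ i := by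
  have := (EuclideanSpace.proj (𝕜 := ℝ) i).integral_comp_comm
    (IsGaussian.integrable_fun_id (μ := multivariateGaussian μ S))
  simpa using this

lemma integral_eval_mul_eval_multivariateGaussian (hS : S.PosSemidef) (i j : ι) :
    ∫ x : EuclideanSpace ℝ ι, x i * x j ∂(multivariateGaussian μ S) = S i j + μ i * μ j := by
  have h_cov := covariance_eq_sub (memLp_eval_multivariateGaussian (μ := μ) (S := S) i)
    (memLp_eval_multivariateGaussian j)
  rw [covariance_eval_multivariateGaussian hS, integral_eval_multivariateGaussian,
    integral_eval_multivariateGaussian] at h_cov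
  exact sub_eq_iff_eq_add.1 h_cov.symm

lemma integrable_eval_mul_eval_multivariateGaussian (i j : ι) :
    Integrable (fun x : EuclideanSpace ℝ ι ↦ x i * x j) (multivariateGaussian μ S) :=
  (memLp_eval_multivariateGaussian i).integrable_mul (memLp_eval_multivariateGaussian j)

lemma integrable_dotProduct_mulVec_multivariateGaussian (A : Matrix ι ι ℝ) :
    Integrable (fun x : EuclideanSpace ℝ ι ↦ x ⬝ᵥ A *ᵥ x) (multivariateGaussian μ S) := by
  simp only [dotProduct_mulVec_self_eq_sum]
  exact integrable_finsetSum _ fun i _ ↦ integrable_finsetSum _ fun j _ ↦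
    (integrable_eval_mul_eval_multivariateGaussian i j).const_mul _

lemma integral_dotProduct_mulVec_multivariateGaussian (hS : S.PosSemidef) (A : Matrix ι ι ℝ) :
    ∫ x : EuclideanSpace ℝ ι, x ⬝ᵥ A *ᵥ x ∂(multivariateGaussian μ S) =
      (A * S).trace + μ ⬝ᵥ A *ᵥ μ := by
  have h_int (i j : ι) :
      Integrable (fun x : EuclideanSpace ℝ ι ↦ A i j * (x i * x j)) (multivariateGaussian μ S) :=
    (integrable_eval_mul_eval_multivariateGaussian i j).const_mul _
  have h_trace : ∑ i, ∑ j, A i j * S i j = (A * S).trace := by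
    have h_symm (i j : ι) : S i j = S j i := by simpa using (hS.isHermitian.apply i j).symm
    simp only [trace, diag_apply, mul_apply]
    exact Finset.sum_congr rfl fun i _ ↦ Finset.sum_congr rfl fun j _ ↦ by rw [h_symm]
  simp only [dotProduct_mulVec_self_eq_sum]
  rw [integral_finsetSum _ fun i _ ↦ integrable_finsetSum _ fun j _ ↦ h_int i j]
  simp_rw [integral_finsetSum _ fun j _ ↦ h_int _ j, integral_const_mul,
    integral_eval_mul_eval_multivariateGaussian hS, mul_add, Finset.sum_add_distrib, h_trace]

end QuadraticForm

section GaussianMeasure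

variable {p : ℕ} {S T : Matrix (Fin p) (Fin p) ℝ}

@[fun_prop]
lemma measurable_gaussianDensity : Measurable (gaussianDensity S) := by
  unfold gaussianDensity
  simp only [dotProduct, mulVec]
  fun_prop

lemma gaussianDensity_pos (hS : S.PosDef) (x : EuclideanSpace ℝ (Fin p)) :
    0 < gaussianDensity S x := by
  have := hS.det_pos
  unfold gaussianDensity
  positivity

lemma log_gaussianDensity (hS : S.PosDef) (x : EuclideanSpace ℝ (Fin p)) :
    Real.log (gaussianDensity S x) =
      -(p * Real.log (2 * Real.pi) + Real.log S.det + x ⬝ᵥ S⁻¹ *ᵥ x) / 2 := by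
  have := hS.det_pos
  rw [gaussianDensity, Real.log_mul (by positivity) (by positivity), Real.log_exp,
    Real.log_rpow (by positivity), Real.log_mul (by positivity) (by positivity), Real.log_pow]
  ring

lemma gaussianDensity_toEuclideanCLM {L : Matrix (Fin p) (Fin p) ℝ} (hL : L.det ≠ 0)
    (x : EuclideanSpace ℝ (Fin p)) :
    gaussianDensity (L * Lᵀ) (toEuclideanCLM (𝕜 := ℝ) L x) =
      |L.det|⁻¹ * ((2 * Real.pi) ^ (-(p : ℝ) / 2) * Real.exp (-‖x‖ ^ 2 / 2)) := by
  have hL' : IsUnit L.det := isUnit_iff_ne_zero.2 hL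
  have h_const : ((2 * Real.pi) ^ p * (L * Lᵀ).det) ^ (-(1 : ℝ) / 2) =
      |L.det|⁻¹ * (2 * Real.pi) ^ (-(p : ℝ) / 2) := by
    rw [det_mul, det_transpose, ← sq, ← sq_abs, Real.mul_rpow (by positivity) (by positivity),
      ← Real.rpow_natCast, ← Real.rpow_natCast, ← Real.rpow_mul (by positivity),
      ← Real.rpow_mul (by positivity), ← Real.rpow_neg_one, mul_comm]
    congr 2 <;> push_cast <;> ring
  have h_quad : (L *ᵥ x) ⬝ᵥ (L * Lᵀ)⁻¹ *ᵥ (L *ᵥ x) = ‖x‖ ^ 2 := by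
    rw [Matrix.mul_inv_rev, mulVec_mulVec, Matrix.mul_assoc, nonsing_inv_mul _ hL', Matrix.mul_one,
      dotProduct_mulVec, ← mulVec_transpose, mulVec_mulVec, transpose_nonsing_inv,
      transpose_transpose, nonsing_inv_mul _ hL', one_mulVec, EuclideanSpace.real_norm_sq_eq]
    simp [dotProduct, sq]
  rw [gaussianDensity, h_const, ofLp_toEuclideanCLM, h_quad]
  ring_nf

lemma map_toEuclideanCLM_stdGaussian {L : Matrix (Fin p) (Fin p) ℝ} (hL : L.det ≠ 0) :
    (stdGaussian (EuclideanSpace ℝ (Fin p))).map (toEuclideanCLM (𝕜 := ℝ) L) =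
      gaussianMeasure (L * Lᵀ) := by
  set f := toEuclideanCLM (𝕜 := ℝ) L
  have hf : Measurable f := f.continuous.measurable
  have hf_det : LinearMap.det (f : EuclideanSpace ℝ (Fin p) →ₗ[ℝ] _) = L.det := by
    rw [coe_toEuclideanCLM_eq_toEuclideanLin, LinearMap.det_toLpLin]
  have h_volume : Measure.map f volume = ENNReal.ofReal |L.det⁻¹| • volume := by
    rw [← hf_det]
    exact Measure.map_linearMap_addHaar_eq_smul_addHaar volume (hf_det ▸ hL)
  have hg : Measurable fun x ↦ ENNReal.ofReal (|L.det| * gaussianDensity (L * Lᵀ) x) := by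
    fun_prop
  have h_density : (fun x : EuclideanSpace ℝ (Fin p) ↦ ENNReal.ofReal
      ((2 * Real.pi) ^ (-(p : ℝ) / 2) * Real.exp (-‖x‖ ^ 2 / 2))) =
      (fun x ↦ ENNReal.ofReal (|L.det| * gaussianDensity (L * Lᵀ) x)) ∘ f := by
    funext x
    simp only [Function.comp_apply]
    rw [gaussianDensity_toEuclideanCLM hL, mul_inv_cancel_left₀ (abs_ne_zero.2 hL)]
  rw [stdGaussian_eq_withDensity, finrank_euclideanSpace_fin, h_density,
    map_withDensity_comp hf hg, h_volume, withDensity_smul_measure,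
    ← withDensity_smul _ hg, gaussianMeasure]
  congr 1
  funext x
  rw [Pi.smul_apply, smul_eq_mul, ← ENNReal.ofReal_mul (abs_nonneg _), abs_inv,
    inv_mul_cancel_left₀ (abs_ne_zero.2 hL)]

open scoped MatrixOrder in
lemma gaussianMeasure_eq_multivariateGaussian (hS : S.PosDef) :
    gaussianMeasure S = multivariateGaussian 0 S := by
  have h_sq : CFC.sqrt S * CFC.sqrt S = S := CFC.sqrt_mul_sqrt_self S hS.posSemidef.nonneg
  have h_transpose : (CFC.sqrt S)ᵀ = CFC.sqrt S :=
    (nonneg_iff_posSemidef.1 (CFC.sqrt_nonneg S)).isHermitian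
  have h_det : (CFC.sqrt S).det ≠ 0 := fun h ↦
    hS.det_pos.ne' (by rw [← h_sq, det_mul, h, zero_mul])
  have h_map := map_toEuclideanCLM_stdGaussian h_det
  rw [h_transpose, h_sq] at h_map
  simp [← h_map, multivariateGaussian]

lemma isProbabilityMeasure_gaussianMeasure (hS : S.PosDef) :
    IsProbabilityMeasure (gaussianMeasure S) := by
  rw [gaussianMeasure_eq_multivariateGaussian hS]
  infer_instance

lemma gaussianMeasure_absolutelyContinuous (hT : T.PosDef) :
    gaussianMeasure S ≪ gaussianMeasure T :=
  (withDensity_absolutelyContinuous _ _).trans <|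
    withDensity_absolutelyContinuous' (by fun_prop)
      (ae_of_all _ fun x ↦ by simp [gaussianDensity_pos hT x])

lemma llr_gaussianMeasure (hS : S.PosDef) (hT : T.PosDef) :
    llr (gaussianMeasure S) (gaussianMeasure T) =ᵐ[gaussianMeasure S]
      fun x ↦ (x ⬝ᵥ (T⁻¹ - S⁻¹) *ᵥ x + Real.log (T.det / S.det)) / 2 := by
  have h_llr := llr_withDensity_ofReal (μ := volume) (f := gaussianDensity S)
    (g := gaussianDensity T) (by fun_prop) (by fun_prop) (gaussianDensity_pos hS)
    (gaussianDensity_pos hT)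
  filter_upwards [(withDensity_absolutelyContinuous _ _).ae_le h_llr] with x hx
  refine hx.trans ?_
  rw [log_gaussianDensity hS, log_gaussianDensity hT, sub_mulVec, dotProduct_sub,
    Real.log_div hT.det_pos.ne' hS.det_pos.ne']
  ring

lemma integrable_llr_gaussianMeasure (hS : S.PosDef) (hT : T.PosDef) :
    Integrable (llr (gaussianMeasure S) (gaussianMeasure T)) (gaussianMeasure S) := by
  rw [integrable_congr (llr_gaussianMeasure hS hT), gaussianMeasure_eq_multivariateGaussian hS]
  exact ((integrable_dotProduct_mulVec_multivariateGaussian _).add (integrable_const _)).div_const 2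

theorem klDiv_gaussianMeasure (hS : S.PosDef) (hT : T.PosDef) :
    klDiv (gaussianMeasure S) (gaussianMeasure T) =
      ((T⁻¹ * S).trace - p + Real.log (T.det / S.det)) / 2 := by
  have h_inv : S⁻¹ * S = 1 := nonsing_inv_mul _ (isUnit_iff_ne_zero.2 hS.det_pos.ne')
  calc klDiv (gaussianMeasure S) (gaussianMeasure T)
      = ∫ x, (x ⬝ᵥ (T⁻¹ - S⁻¹) *ᵥ x + Real.log (T.det / S.det)) / 2 ∂(gaussianMeasure S) :=
        integral_congr_ae (llr_gaussianMeasure hS hT)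
    _ = (((T⁻¹ - S⁻¹) * S).trace + Real.log (T.det / S.det)) / 2 := by
        rw [gaussianMeasure_eq_multivariateGaussian hS, integral_div,
          integral_add (integrable_dotProduct_mulVec_multivariateGaussian _) (integrable_const _),
          integral_dotProduct_mulVec_multivariateGaussian hS.posSemidef]
        simp
    _ = ((T⁻¹ * S).trace - p + Real.log (T.det / S.det)) / 2 := by
        rw [Matrix.sub_mul, h_inv, trace_sub, trace_one, Fintype.card_fin]

end GaussianMeasure

section SpikedCovariance

variable {m n : Type*} [Fintype m] [Fintype n] [DecidableEq n]
  {lam s2 : ℝ} {U V : Matrix m n ℝ}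

lemma isIdempotentElem_mul_transpose (hU : Uᵀ * U = 1) : IsIdempotentElem (U * Uᵀ) := by
  rw [IsIdempotentElem, Matrix.mul_assoc, ← Matrix.mul_assoc Uᵀ, hU, Matrix.one_mul]

lemma trace_mul_transpose (hU : Uᵀ * U = 1) : (U * Uᵀ).trace = Fintype.card n := by
  rw [trace_mul_comm, hU, trace_one]

variable [DecidableEq m]

open scoped MatrixOrder in
lemma posSemidef_one_sub_mul_transpose (hU : Uᵀ * U = 1) :
    (1 - U * Uᵀ).PosSemidef := by
  have h_proj : IsStarProjection (1 - U * Uᵀ) := by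
    refine ⟨(isIdempotentElem_mul_transpose hU).one_sub, ?_⟩
    simp [IsSelfAdjoint, star_eq_conjTranspose, conjTranspose_eq_transpose_of_trivial]
  exact nonneg_iff_posSemidef.1 h_proj.nonneg

/-- The covariance matrix `λUUᵀ + σ²I` of the spiked model with signal strength `lam = λ` and
noise level `s2 = σ²`; the columns of `U` span the signal space when `UᵀU = I`. -/
def spikedCovariance (lam s2 : ℝ) (U : Matrix m n ℝ) : Matrix m m ℝ :=
  lam • (U * Uᵀ) + s2 • 1

lemma posDef_spikedCovariance (hs2 : 0 < s2) (hlam : -s2 < lam) (hU : Uᵀ * U = 1) :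
    (spikedCovariance lam s2 U).PosDef := by
  rcases le_total 0 lam with h | h
  · have h_proj : (U * Uᵀ).PosSemidef := by
      simpa [conjTranspose_eq_transpose_of_trivial] using posSemidef_self_mul_conjTranspose U
    exact PosDef.posSemidef_add (h_proj.smul h) (PosDef.one.smul hs2)
  · have h_eq : spikedCovariance lam s2 U = (-lam) • (1 - U * Uᵀ) + (s2 + lam) • 1 := by
      rw [spikedCovariance]
      module
    rw [h_eq]
    exact PosDef.posSemidef_add ((posSemidef_one_sub_mul_transpose hU).smul (by linarith))
      (PosDef.one.smul (by linarith))

lemma det_spikedCovariance (hs2 : s2 ≠ 0) (hU : Uᵀ * U = 1) :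
    (spikedCovariance lam s2 U).det = s2 ^ Fintype.card m * (1 + lam / s2) ^ Fintype.card n := by
  have h_factor : spikedCovariance lam s2 U = s2 • (1 + ((lam / s2) • U) * Uᵀ) := by
    rw [spikedCovariance, smul_add, smul_mul, smul_smul, mul_div_cancel₀ _ hs2, add_comm]
  have h_core : (1 : Matrix n n ℝ) + Uᵀ * ((lam / s2) • U) = (1 + lam / s2) • 1 := by
    rw [Matrix.mul_smul, hU, add_smul, one_smul]
  rw [h_factor, det_smul, det_one_add_mul_comm, h_core, det_smul, det_one, mul_one]

lemma inv_spikedCovariance (hs2 : s2 ≠ 0) (hlam : s2 + lam ≠ 0) (hU : Uᵀ * U = 1) :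
    (spikedCovariance lam s2 U)⁻¹ = s2⁻¹ • (1 - (lam / (s2 + lam)) • (U * Uᵀ)) := by
  refine inv_eq_right_inv ?_
  have h_idem : U * Uᵀ * (U * Uᵀ) = U * Uᵀ := isIdempotentElem_mul_transpose hU
  rw [spikedCovariance]
  simp only [Matrix.add_mul, Matrix.mul_sub, smul_mul, Matrix.mul_smul, h_idem, Matrix.mul_one,
    Matrix.one_mul]
  match_scalars
  · field_simp
    ring
  · field_simp

lemma trace_inv_mul_spikedCovariance (hs2 : s2 ≠ 0) (hlam : s2 + lam ≠ 0) (hU : Uᵀ * U = 1)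
    (hV : Vᵀ * V = 1) :
    ((spikedCovariance lam s2 V)⁻¹ * spikedCovariance lam s2 U).trace = Fintype.card m +
      lam ^ 2 / (s2 * (s2 + lam)) * (Fintype.card n - (U * Uᵀ * (V * Vᵀ)).trace) := by
  rw [inv_spikedCovariance hs2 hlam hV, spikedCovariance, trace_mul_comm (U * Uᵀ)]
  simp only [Matrix.mul_add, Matrix.sub_mul, smul_mul, Matrix.mul_smul, Matrix.mul_one,
    Matrix.one_mul, trace_add, trace_sub, trace_smul, trace_mul_transpose hU,
    trace_mul_transpose hV, trace_one, smul_eq_mul]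
  field_simp
  ring

end SpikedCovariance

section SpikedGaussian

variable {p r : ℕ} {lam s2 : ℝ} {U V : Matrix (Fin p) (Fin r) ℝ}

lemma frobNorm_sq_eq_trace {m n : ℕ} (A : Matrix (Fin m) (Fin n) ℝ) :
    frobNorm A ^ 2 = (A * Aᵀ).trace := by
  rw [frobNorm, Real.sq_sqrt (by positivity)]
  simp [trace, mul_apply, sq]

lemma frobNorm_sq_sub_mul_transpose (hU : Uᵀ * U = 1) (hV : Vᵀ * V = 1) :
    frobNorm (U * Uᵀ - V * Vᵀ) ^ 2 = 2 * (r - (U * Uᵀ * (V * Vᵀ)).trace) := by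
  have hU_idem : U * Uᵀ * (U * Uᵀ) = U * Uᵀ := isIdempotentElem_mul_transpose hU
  have hV_idem : V * Vᵀ * (V * Vᵀ) = V * Vᵀ := isIdempotentElem_mul_transpose hV
  have h_symm : (U * Uᵀ - V * Vᵀ)ᵀ = U * Uᵀ - V * Vᵀ := by
    simp only [transpose_sub, transpose_mul, transpose_transpose]
  rw [frobNorm_sq_eq_trace, h_symm, Matrix.sub_mul, Matrix.mul_sub, Matrix.mul_sub, hU_idem,
    hV_idem, trace_sub, trace_sub, trace_sub, trace_mul_transpose hU, trace_mul_transpose hV,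
    trace_mul_comm (V * Vᵀ), Fintype.card_fin]
  ring

theorem klDiv_gaussianMeasure_spikedCovariance (hs2 : 0 < s2) (hlam : -s2 < lam)
    (hU : Uᵀ * U = 1) (hV : Vᵀ * V = 1) :
    klDiv (gaussianMeasure (spikedCovariance lam s2 U))
        (gaussianMeasure (spikedCovariance lam s2 V)) =
      lam ^ 2 / (s2 * (s2 + lam)) * frobNorm (U * Uᵀ - V * Vᵀ) ^ 2 / 4 := by
  have hU_pos := posDef_spikedCovariance hs2 hlam hU
  have hV_pos := posDef_spikedCovariance hs2 hlam hV
  have h_det : (spikedCovariance lam s2 V).det / (spikedCovariance lam s2 U).det = 1 := by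
    rw [det_spikedCovariance hs2.ne' hV, ← det_spikedCovariance hs2.ne' hU,
      div_self hU_pos.det_pos.ne']
  rw [klDiv_gaussianMeasure hU_pos hV_pos, h_det, Real.log_one,
    trace_inv_mul_spikedCovariance hs2.ne' (by linarith) hU hV, frobNorm_sq_sub_mul_transpose hU hV,
    Fintype.card_fin, Fintype.card_fin]
  ring

end SpikedGaussian

theorem klDiv_tv_spiked_gaussians_le_general {p r : ℕ} {lam s2 ε₀ : ℝ} (hs2 : 0 < s2)
    (hlam : -s2 < lam) {U₁ U₂ : Matrix (Fin p) (Fin r) ℝ} (h₁ : U₁ᵀ * U₁ = 1)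
    (h₂ : U₂ᵀ * U₂ = 1) (hF : frobNorm (U₁ * U₁ᵀ - U₂ * U₂ᵀ) ≤ ε₀) :
    klDiv (gaussianMeasure (spikedCovariance lam s2 U₁))
        (gaussianMeasure (spikedCovariance lam s2 U₂))
      ≤ (1 / 2) * (lam ^ 2 / (s2 * (s2 + lam))) * ε₀ ^ 2 ∧
    tvDist (gaussianMeasure (spikedCovariance lam s2 U₁))
        (gaussianMeasure (spikedCovariance lam s2 U₂))
      ≤ (ε₀ / 2) * √(lam ^ 2 / (s2 * (s2 + lam))) := by
  have h₁_pos := posDef_spikedCovariance hs2 hlam h₁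
  have h₂_pos := posDef_spikedCovariance hs2 hlam h₂
  have := isProbabilityMeasure_gaussianMeasure h₁_pos
  have := isProbabilityMeasure_gaussianMeasure h₂_pos
  have hF0 : 0 ≤ frobNorm (U₁ * U₁ᵀ - U₂ * U₂ᵀ) := Real.sqrt_nonneg _
  have hε₀ : 0 ≤ ε₀ := hF0.trans hF
  set K := lam ^ 2 / (s2 * (s2 + lam))
  have hK : 0 ≤ K := div_nonneg (sq_nonneg _) (mul_pos hs2 (by linarith)).le
  have h_kl : klDiv (gaussianMeasure (spikedCovariance lam s2 U₁))
      (gaussianMeasure (spikedCovariance lam s2 U₂)) ≤ (1 / 2) * K * ε₀ ^ 2 :=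
    calc _ = K * frobNorm (U₁ * U₁ᵀ - U₂ * U₂ᵀ) ^ 2 / 4 :=
          klDiv_gaussianMeasure_spikedCovariance hs2 hlam h₁ h₂
      _ ≤ K * ε₀ ^ 2 / 4 := by gcongr
      _ ≤ (1 / 2) * K * ε₀ ^ 2 := by linarith [mul_nonneg hK (sq_nonneg ε₀)]
  refine ⟨h_kl, ?_⟩
  calc _ ≤ √(klDiv (gaussianMeasure (spikedCovariance lam s2 U₁))
          (gaussianMeasure (spikedCovariance lam s2 U₂)) / 2) :=
        tvDist_le_sqrt_half_klDiv (gaussianMeasure_absolutelyContinuous h₂_pos)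
          (integrable_llr_gaussianMeasure h₁_pos h₂_pos)
    _ ≤ √((ε₀ / 2) ^ 2 * K) := Real.sqrt_le_sqrt (by linarith)
    _ = (ε₀ / 2) * √K := by rw [Real.sqrt_mul (by positivity), Real.sqrt_sq (by positivity)]

/-- For spiked covariances `Σᵢ = λUᵢUᵢᵀ + σ²I` with `‖U₁U₁ᵀ − U₂U₂ᵀ‖_F ≤ ε₀`:
`KL(N(0,Σ₁)‖N(0,Σ₂)) ≤ (1/2)·(λ²/(σ²(σ²+λ)))·ε₀²` and, by Pinsker's inequality,
`TV(N(0,Σ₁), N(0,Σ₂)) ≤ (ε₀/2)·√(λ²/(σ²(σ²+λ)))`. -/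
theorem klDiv_tv_spiked_gaussians_le (p r : ℕ) (lam s2 ε₀ : ℝ)
    (hlam : 0 < lam) (hs2 : 0 < s2) (hε₀ : 0 ≤ ε₀)
    (U₁ U₂ : Matrix (Fin p) (Fin r) ℝ) (h₁ : U₁ᵀ * U₁ = 1) (h₂ : U₂ᵀ * U₂ = 1)
    (hF : frobNorm (U₁ * U₁ᵀ - U₂ * U₂ᵀ) ≤ ε₀) :
    klDiv (gaussianMeasure (lam • (U₁ * U₁ᵀ) + s2 • (1 : Matrix (Fin p) (Fin p) ℝ)))
        (gaussianMeasure (lam • (U₂ * U₂ᵀ) + s2 • (1 : Matrix (Fin p) (Fin p) ℝ)))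
      ≤ (1 / 2) * (lam ^ 2 / (s2 * (s2 + lam))) * ε₀ ^ 2 ∧
    tvDist (gaussianMeasure (lam • (U₁ * U₁ᵀ) + s2 • (1 : Matrix (Fin p) (Fin p) ℝ)))
        (gaussianMeasure (lam • (U₂ * U₂ᵀ) + s2 • (1 : Matrix (Fin p) (Fin p) ℝ)))
      ≤ (ε₀ / 2) * Real.sqrt (lam ^ 2 / (s2 * (s2 + lam))) :=
  klDiv_tv_spiked_gaussians_le_general hs2 (by linarith) h₁ h₂ hF
end

section
/- (DP Fano lower bound, privacy term) Let Q = {P₁,...,P_N} be product measures P_i = μ_i^{(1)}×⋯×μ_i^{(n)} with parameters θ(P_i) in a pseudo-metric space (Θ,ρ) satisfying ρ(θ(P_i), θ(P_j)) ≥ ρ₀ and Σ_{k∈[n]} TV(μ_i^{(k)}, μ_j^{(k)}) ≤ t₀ for all i ≠ j. Then every (ε,δ)-differentially private algorithm A satisfies sup_{i∈[N]} E[ρ(A, θ(P_i))] ≥ (ρ₀/4)·min{1, (N−1)/exp(4εt₀)}·(1 − 2δe^{4εt₀}/(e^ε − 1)). -/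
open MeasureTheory

/-- `(ε,δ)`-differential privacy for a randomized algorithm on datasets of `n`
observations: for any two datasets differing in one coordinate,
`P(A(X) ∈ E) ≤ e^ε P(A(X') ∈ E) + δ` for every measurable `E`. -/
def IsDP {Ω Θ : Type*} [MeasurableSpace Ω] [MeasurableSpace Θ] (n : ℕ)
    (A : (Fin n → Ω) → Measure Θ) (ε δ : ℝ) : Prop :=
  ∀ x x' : Fin n → Ω, (∃ i, ∀ j, j ≠ i → x j = x' j) →
    ∀ E : Set Θ, MeasurableSet E →
      A x E ≤ ENNReal.ofReal (Real.exp ε) * A x' E + ENNReal.ofReal δ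

/-!
Let `Q i` be the law of the output on data from `P i`, and let `E i` be the ball of radius `ρ₀ / 2`
around `θ i`. These balls are disjoint and, by Markov's inequality, the risk at `i` is at least
`ρ₀ / 2 * (1 - Q i (E i))`, so it suffices to find an `i` for which `Q i (E i)` is small. Coupling
`P i` and `P j` coordinatewise, the two datasets differ in a random number `D` of observations with
`E[D] ≤ t₀`, and group privacy compares the two outputs at the price of a factor `exp (-ε D)`. By
Jensen's inequality, `1 / 2 ≤ Q i (E i)` then forces
`exp (-2εt₀) / 2 - δ / (exp ε - 1) ≤ Q j (E i)`. If this happens for every `i`, the disjointness of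
the balls bounds `Q j (E j)` away from `1`.
-/

section TotalVariation

variable {Ω : Type*} [MeasurableSpace Ω] (μ ν : Measure Ω)

lemma tvDist_nonneg : 0 ≤ tvDist μ ν :=
  Real.iSup_nonneg fun _ => abs_nonneg _

variable [IsFiniteMeasure μ] [IsFiniteMeasure ν]

lemma measureReal_sub_measureReal_le_tvDist {s : Set Ω} (hs : MeasurableSet s) :
    μ.real s - ν.real s ≤ tvDist μ ν := by
  have hbdd : BddAbove (Set.range fun E : {s : Set Ω // MeasurableSet s} =>
      |(μ E).toReal - (ν E).toReal|) := by
    refine ⟨μ.real Set.univ + ν.real Set.univ, ?_⟩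
    rintro _ ⟨E, rfl⟩
    calc |μ.real E - ν.real E| ≤ |μ.real E| + |ν.real E| := abs_sub _ _
      _ = μ.real E + ν.real E := by simp only [abs_of_nonneg measureReal_nonneg]
      _ ≤ μ.real Set.univ + ν.real Set.univ :=
          add_le_add (measureReal_mono (Set.subset_univ _)) (measureReal_mono (Set.subset_univ _))
  exact (le_abs_self _).trans (le_ciSup hbdd ⟨s, hs⟩)

lemma add_measure_sub_comm : μ + (ν - μ) = ν + (μ - ν) := by
  rw [← Measure.toSignedMeasure_eq_toSignedMeasure_iff, Measure.toSignedMeasure_add,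
    Measure.toSignedMeasure_add, add_comm ν.toSignedMeasure, ← sub_eq_sub_iff_add_eq_add]
  exact Measure.sub_toSignedMeasure_eq_toSignedMeasure_sub

lemma exists_add_measure_sub_eq : ∃ m : Measure Ω, m + (μ - ν) = μ ∧ m + (ν - μ) = ν := by
  have hμ : μ - (μ - ν) + (μ - ν) = μ := Measure.sub_add_cancel_of_le Measure.sub_le
  refine ⟨μ - (μ - ν), hμ, (Measure.add_left_inj (μ - ν) _ _).1 ?_⟩
  rw [add_right_comm, hμ, add_measure_sub_comm]

lemma measureReal_univ_sub_le_tvDist : (μ - ν).real Set.univ ≤ tvDist μ ν := by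
  obtain ⟨s, hs⟩ := exists_isHahnDecomposition μ ν
  have hsum : μ.real sᶜ + (ν - μ).real sᶜ = ν.real sᶜ + (μ - ν).real sᶜ := by
    rw [← measureReal_add_apply, ← measureReal_add_apply, add_measure_sub_comm]
  have hpos : (μ - ν).real s = 0 := by
    simp [Measure.real, Measure.sub_apply_eq_zero_of_isHahnDecomposition hs]
  have hneg : (ν - μ).real sᶜ = 0 := by
    simp [Measure.real, Measure.sub_apply_eq_zero_of_isHahnDecomposition hs.compl]
  have hsplit := measureReal_add_measureReal_compl (μ := μ - ν) hs.measurableSet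
  linarith [measureReal_sub_measureReal_le_tvDist μ ν hs.measurableSet.compl]

end TotalVariation

section Coupling

/-- The sample space of a coupling of two laws on `Ω`: `inl w` records that both draws equal `w`,
and `inr (x, y)` that the draws are `x` and `y`, possibly different. Unlike in `Ω × Ω`, the event
that the draws may differ is measurable even when the diagonal of `Ω` is not. -/
abbrev DrawPair (Ω : Type*) := Ω ⊕ Ω × Ω

namespace DrawPair

/-- The first draw of a pair. -/
def fst {Ω : Type*} : DrawPair Ω → Ω := Sum.elim id Prod.fst

/-- The second draw of a pair. -/
def snd {Ω : Type*} : DrawPair Ω → Ω := Sum.elim id Prod.snd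

lemma fst_eq_snd_of_not_isRight {Ω : Type*} : ∀ {z : DrawPair Ω}, ¬ z.isRight → z.fst = z.snd
  | .inl _, _ => rfl
  | .inr _, h => absurd rfl h

variable {Ω : Type*} [MeasurableSpace Ω]

lemma measurable_fst : Measurable (fst : DrawPair Ω → Ω) :=
  measurable_id.sumElim _root_.measurable_fst

lemma measurable_snd : Measurable (snd : DrawPair Ω → Ω) :=
  measurable_id.sumElim _root_.measurable_snd

lemma measurableSet_isRight : MeasurableSet {z : DrawPair Ω | z.isRight} :=
  measurableSet_sum_iff.2 ⟨by simp, by simp⟩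

end DrawPair

/-- `π` is a coupling of `μ` and `ν`: its two draws have laws `μ` and `ν`. -/
structure IsCoupling {Ω : Type*} [MeasurableSpace Ω] (π : Measure (DrawPair Ω))
    (μ ν : Measure Ω) : Prop where
  measurePreserving_fst : MeasurePreserving DrawPair.fst π μ
  measurePreserving_snd : MeasurePreserving DrawPair.snd π ν

lemma IsCoupling.isProbabilityMeasure {Ω : Type*} [MeasurableSpace Ω] {π : Measure (DrawPair Ω)}
    {μ ν : Measure Ω} [IsProbabilityMeasure μ] (h : IsCoupling π μ ν) : IsProbabilityMeasure π :=
  have : IsProbabilityMeasure (π.map DrawPair.fst) := by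
    rwa [h.measurePreserving_fst.map_eq]
  Measure.isProbabilityMeasure_of_map DrawPair.fst

lemma exists_measure_prod_map_eq {α β : Type*} [MeasurableSpace α] [MeasurableSpace β]
    (a : Measure α) (b : Measure β) [IsFiniteMeasure a] [SFinite b]
    (h : a Set.univ = b Set.univ) :
    ∃ q : Measure (α × β), q.map Prod.fst = a ∧ q.map Prod.snd = b := by
  rcases eq_or_ne (a Set.univ) 0 with ha | ha
  · exact ⟨0, by simp [Measure.measure_univ_eq_zero.1 ha],
      by simp [Measure.measure_univ_eq_zero.1 (h ▸ ha)]⟩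
  · have hinv := ENNReal.inv_mul_cancel ha (measure_ne_top a _)
    refine ⟨(a Set.univ)⁻¹ • a.prod b, ?_, ?_⟩
    · rw [Measure.map_smul, Measure.map_fst_prod, smul_smul, ← h, hinv, one_smul]
    · rw [Measure.map_smul, Measure.map_snd_prod, smul_smul, hinv, one_smul]

-- The common part of `μ` and `ν` is drawn once; the excesses `μ - ν` and `ν - μ` are drawn
-- independently of each other, on the `inr` summand.
lemma exists_isCoupling_measureReal_isRight_le_tvDist {Ω : Type*} [MeasurableSpace Ω]
    (μ ν : Measure Ω) [IsFiniteMeasure μ] [IsFiniteMeasure ν] (h : μ Set.univ = ν Set.univ) :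
    ∃ π : Measure (DrawPair Ω), IsCoupling π μ ν ∧ π.real {z | z.isRight} ≤ tvDist μ ν := by
  obtain ⟨m, hμ, hν⟩ := exists_add_measure_sub_eq μ ν
  have hm : m Set.univ ≠ ⊤ :=
    ((hμ ▸ Measure.le_add_right le_rfl : m ≤ μ) Set.univ).trans_lt (measure_lt_top μ _) |>.ne
  have hexcess : (μ - ν) Set.univ = (ν - μ) Set.univ := by
    rw [← ENNReal.add_right_inj hm, ← Measure.add_apply, ← Measure.add_apply, hμ, hν, h]
  obtain ⟨q, hqfst, hqsnd⟩ := exists_measure_prod_map_eq _ _ hexcess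
  refine ⟨m.map Sum.inl + q.map Sum.inr, ⟨⟨DrawPair.measurable_fst, ?_⟩,
    ⟨DrawPair.measurable_snd, ?_⟩⟩, ?_⟩
  · rw [Measure.map_add _ _ DrawPair.measurable_fst,
      Measure.map_map DrawPair.measurable_fst measurable_inl,
      Measure.map_map DrawPair.measurable_fst measurable_inr]
    simp only [DrawPair.fst, Sum.elim_comp_inl, Sum.elim_comp_inr, Measure.map_id, hqfst, hμ]
  · rw [Measure.map_add _ _ DrawPair.measurable_snd,
      Measure.map_map DrawPair.measurable_snd measurable_inl,
      Measure.map_map DrawPair.measurable_snd measurable_inr]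
    simp only [DrawPair.snd, Sum.elim_comp_inl, Sum.elim_comp_inr, Measure.map_id, hqsnd, hν]
  · have hright : (m.map Sum.inl + q.map Sum.inr : Measure (DrawPair Ω)) {z | z.isRight} =
        (μ - ν) Set.univ := by
      rw [Measure.add_apply, Measure.map_apply measurable_inl DrawPair.measurableSet_isRight,
        Measure.map_apply measurable_inr DrawPair.measurableSet_isRight, ← hqfst,
        Measure.map_apply measurable_fst .univ]
      simp
    rw [Measure.real, hright]
    exact measureReal_univ_sub_le_tvDist μ ν

end Coupling

section Mismatches

variable {ι : Type*} [Fintype ι] {Ω : ι → Type*}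

/-- The coordinates in which two coupled families may differ: those drawn as `Sum.inr`. -/
def mismatches (z : ∀ k, DrawPair (Ω k)) : Finset ι := {k | (z k).isRight}

lemma fst_eq_snd_of_notMem_mismatches {z : ∀ k, DrawPair (Ω k)} {k : ι} (hk : k ∉ mismatches z) :
    (z k).fst = (z k).snd :=
  DrawPair.fst_eq_snd_of_not_isRight (by simpa [mismatches] using hk)

lemma natCast_card_mismatches (z : ∀ k, DrawPair (Ω k)) :
    ((mismatches z).card : ℝ) =
      ∑ k, (Function.eval k ⁻¹' {w : DrawPair (Ω k) | w.isRight}).indicator (fun _ => 1) z := by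
  simp [mismatches, Set.indicator_apply]

variable [∀ k, MeasurableSpace (Ω k)] (π : ∀ k, Measure (DrawPair (Ω k)))

lemma integrable_indicator_isRight [∀ k, IsFiniteMeasure (π k)] (k : ι) :
    Integrable ((Function.eval k ⁻¹' {w : DrawPair (Ω k) | w.isRight}).indicator
      fun _ => (1 : ℝ)) (Measure.pi π) :=
  (integrable_const 1).indicator (measurable_pi_apply k DrawPair.measurableSet_isRight)

lemma integrable_card_mismatches [∀ k, IsFiniteMeasure (π k)] :
    Integrable (fun z => ((mismatches z).card : ℝ)) (Measure.pi π) := by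
  simp only [natCast_card_mismatches]
  exact integrable_finsetSum _ fun k _ => integrable_indicator_isRight π k

lemma integral_card_mismatches [∀ k, IsProbabilityMeasure (π k)] :
    ∫ z, ((mismatches z).card : ℝ) ∂Measure.pi π = ∑ k, (π k).real {w | w.isRight} := by
  simp only [natCast_card_mismatches]
  rw [integral_finsetSum _ fun k _ => integrable_indicator_isRight π k]
  refine Finset.sum_congr rfl fun k _ => ?_
  rw [integral_indicator_const _ (measurable_pi_apply k DrawPair.measurableSet_isRight),
    smul_eq_mul, mul_one]
  exact (measurePreserving_eval π k).measureReal_preimage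
    DrawPair.measurableSet_isRight.nullMeasurableSet

end Mismatches

-- Jensen's inequality for `exp` with the weight `f`, weakened by `∫ f * D ≤ ∫ D`: the tangent to
-- `exp` at `-s` is integrated against `f`, with `s = (∫ D) / ∫ f`.
lemma integral_mul_exp_neg_div_le_integral_mul_exp_neg {α : Type*} [MeasurableSpace α]
    {P : Measure α} {f D : α → ℝ} (hf : Integrable f P) (hD : Integrable D P)
    (hf01 : ∀ x, f x ∈ Set.Icc 0 1) (hD0 : ∀ x, 0 ≤ D x) :
    (∫ x, f x ∂P) * Real.exp (-((∫ x, D x ∂P) / ∫ x, f x ∂P)) ≤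
      ∫ x, f x * Real.exp (-D x) ∂P := by
  set p := ∫ x, f x ∂P
  set s := (∫ x, D x ∂P) / p
  have htangent (x : α) : Real.exp (-s) * ((1 + s) * f x - D x) ≤ f x * Real.exp (-D x) := by
    obtain ⟨h0, h1⟩ := hf01 x
    have hexp : Real.exp (-s) * (1 + s - D x) ≤ Real.exp (-D x) := by
      have h := Real.add_one_le_exp (s - D x)
      calc Real.exp (-s) * (1 + s - D x) ≤ Real.exp (-s) * Real.exp (s - D x) := by
            gcongr; linarith
        _ = Real.exp (-D x) := by rw [← Real.exp_add]; ring_nf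
    calc Real.exp (-s) * ((1 + s) * f x - D x)
        ≤ Real.exp (-s) * ((1 + s) * f x - f x * D x) := by
          gcongr; exact mul_le_of_le_one_left (hD0 x) h1
      _ = f x * (Real.exp (-s) * (1 + s - D x)) := by ring
      _ ≤ f x * Real.exp (-D x) := by gcongr
  have hprod : Integrable (fun x => f x * Real.exp (-D x)) P := by
    refine hf.mono' (hf.aestronglyMeasurable.mul
      (Real.continuous_exp.comp_aestronglyMeasurable hD.aestronglyMeasurable.neg)) ?_
    filter_upwards with x
    rw [Real.norm_of_nonneg (mul_nonneg (hf01 x).1 (Real.exp_pos _).le)]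
    exact mul_le_of_le_one_right (hf01 x).1 (Real.exp_le_one_iff.2 (neg_nonpos.2 (hD0 x)))
  have hint := integral_mono (((hf.const_mul (1 + s)).sub hD).const_mul (Real.exp (-s))) hprod
    htangent
  simp only [Pi.sub_apply, integral_const_mul, integral_sub (hf.const_mul (1 + s)) hD] at hint
  rcases eq_or_ne p 0 with hp | hp
  · rw [hp, zero_mul]
    exact integral_nonneg fun x => mul_nonneg (hf01 x).1 (Real.exp_pos _).le
  · calc p * Real.exp (-s) = Real.exp (-s) * ((1 + s) * p - ∫ x, D x ∂P) := by
          simp only [s]; field_simp; ring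
      _ ≤ _ := hint

section GroupPrivacy

variable {ι : Type*} {Ω : ι → Type*}

/-- Two datasets are neighbors when they differ in at most one observation. -/
def AreNeighbors (x x' : ∀ k, Ω k) : Prop := ∃ i, ∀ j, j ≠ i → x j = x' j

lemma pow_card_mul_le_of_areNeighbors {r : ℝ} (hr : 0 ≤ r) {g : (∀ k, Ω k) → ℝ}
    (hg : ∀ x x', AreNeighbors x x' → r * g x ≤ g x') (S : Finset ι) {x x' : ∀ k, Ω k}
    (hS : ∀ k ∉ S, x k = x' k) : r ^ S.card * g x ≤ g x' := by
  classical
  induction S using Finset.induction_on generalizing x with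
  | empty => simp [funext fun k => hS k (Finset.notMem_empty k)]
  | insert i S hi ih =>
    have hstep := hg x (Function.update x i (x' i)) ⟨i, fun j hj => by simp [hj]⟩
    have hrest : r ^ S.card * g (Function.update x i (x' i)) ≤ g x' := by
      refine ih fun k hk => ?_
      rcases eq_or_ne k i with rfl | hki
      · simp
      · simpa [hki] using hS k (by simp [hki, hk])
    calc r ^ (insert i S).card * g x = r ^ S.card * (r * g x) := by
          rw [Finset.card_insert_of_notMem hi, pow_succ, mul_assoc]
      _ ≤ r ^ S.card * g (Function.update x i (x' i)) := by gcongr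
      _ ≤ g x' := hrest

variable [Fintype ι] {ε δ : ℝ} {f : (∀ k, Ω k) → ℝ}

-- `c = δ / (exp ε - 1)` solves `c + δ = exp ε * c`, so adding it to `f` absorbs the slack `δ`.
lemma mul_exp_neg_card_mismatches_le (hε : 0 < ε) (hδ : 0 ≤ δ)
    (hf : ∀ x x', AreNeighbors x x' → f x ≤ Real.exp ε * f x' + δ) (z : ∀ k, DrawPair (Ω k)) :
    f (fun k => (z k).fst) * Real.exp (-(ε * (mismatches z).card)) ≤
      f (fun k => (z k).snd) + δ / (Real.exp ε - 1) := by
  have hexp : 0 < Real.exp ε - 1 := sub_pos.2 (Real.one_lt_exp_iff.2 hε)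
  set c := δ / (Real.exp ε - 1)
  have hc : c + δ = Real.exp ε * c := by simp only [c]; field_simp; ring
  have hc0 : 0 ≤ c := by positivity
  have hneighbor (x x' : ∀ k, Ω k) (h : AreNeighbors x x') :
      Real.exp (-ε) * (f x + c) ≤ f x' + c := by
    rw [Real.exp_neg, inv_mul_le_iff₀ (Real.exp_pos ε)]
    linarith [hf x x' h]
  have hgroup := pow_card_mul_le_of_areNeighbors (Real.exp_pos (-ε)).le hneighbor (mismatches z)
    fun k => fst_eq_snd_of_notMem_mismatches
  calc f (fun k => (z k).fst) * Real.exp (-(ε * (mismatches z).card))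
      = Real.exp (-ε) ^ (mismatches z).card * f (fun k => (z k).fst) := by
        rw [← Real.exp_nat_mul]; ring_nf
    _ ≤ Real.exp (-ε) ^ (mismatches z).card * (f (fun k => (z k).fst) + c) := by
        gcongr; linarith
    _ ≤ f (fun k => (z k).snd) + c := hgroup

lemma integral_mul_exp_neg_sum_tvDist_div_le [∀ k, MeasurableSpace (Ω k)]
    (μ ν : ∀ k, Measure (Ω k)) [∀ k, IsProbabilityMeasure (μ k)]
    [∀ k, IsProbabilityMeasure (ν k)] (hε : 0 < ε) (hδ : 0 ≤ δ) (hfm : Measurable f)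
    (hf01 : ∀ x, f x ∈ Set.Icc 0 1)
    (hf : ∀ x x', AreNeighbors x x' → f x ≤ Real.exp ε * f x' + δ) :
    (∫ x, f x ∂Measure.pi μ) *
        Real.exp (-(ε * (∑ k, tvDist (μ k) (ν k)) / ∫ x, f x ∂Measure.pi μ)) ≤
      (∫ x, f x ∂Measure.pi ν) + δ / (Real.exp ε - 1) := by
  choose π hπ hπtv using fun k =>
    exists_isCoupling_measureReal_isRight_le_tvDist (μ k) (ν k) (by simp)
  have (k : ι) : IsProbabilityMeasure (π k) := (hπ k).isProbabilityMeasure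
  let X (z : ∀ k, DrawPair (Ω k)) (k : ι) : Ω k := (z k).fst
  let Y (z : ∀ k, DrawPair (Ω k)) (k : ι) : Ω k := (z k).snd
  have hX : MeasurePreserving X (Measure.pi π) (Measure.pi μ) :=
    measurePreserving_pi π μ fun k => (hπ k).measurePreserving_fst
  have hY : MeasurePreserving Y (Measure.pi π) (Measure.pi ν) :=
    measurePreserving_pi π ν fun k => (hπ k).measurePreserving_snd
  have hX_integral : ∫ x, f x ∂Measure.pi μ = ∫ z, f (X z) ∂Measure.pi π := by
    rw [← hX.map_eq, integral_map hX.aemeasurable hfm.aestronglyMeasurable]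
  have hY_integral : ∫ x, f x ∂Measure.pi ν = ∫ z, f (Y z) ∂Measure.pi π := by
    rw [← hY.map_eq, integral_map hY.aemeasurable hfm.aestronglyMeasurable]
  have hX_integrable : Integrable (fun z => f (X z)) (Measure.pi π) :=
    .of_mem_Icc 0 1 (hfm.comp hX.measurable).aemeasurable (.of_forall fun _ => hf01 _)
  have hY_integrable : Integrable (fun z => f (Y z)) (Measure.pi π) :=
    .of_mem_Icc 0 1 (hfm.comp hY.measurable).aemeasurable (.of_forall fun _ => hf01 _)
  have hcard_le : ∫ z, ε * (mismatches z).card ∂Measure.pi π ≤ ε * ∑ k, tvDist (μ k) (ν k) := by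
    rw [integral_const_mul, integral_card_mismatches]
    gcongr with k
    exact hπtv k
  rw [hX_integral, hY_integral]
  have hp : 0 ≤ ∫ z, f (X z) ∂Measure.pi π := integral_nonneg fun _ => (hf01 _).1
  calc _ ≤ (∫ z, f (X z) ∂Measure.pi π) *
          Real.exp (-((∫ z, ε * (mismatches z).card ∂Measure.pi π) /
            ∫ z, f (X z) ∂Measure.pi π)) := by gcongr
    _ ≤ ∫ z, f (X z) * Real.exp (-(ε * (mismatches z).card)) ∂Measure.pi π :=
        integral_mul_exp_neg_div_le_integral_mul_exp_neg hX_integrable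
          ((integrable_card_mismatches π).const_mul ε) (fun _ => hf01 _) fun _ => by positivity
    _ ≤ ∫ z, (f (Y z) + δ / (Real.exp ε - 1)) ∂Measure.pi π := by
        refine integral_mono_of_nonneg ?_ (hY_integrable.add (integrable_const _)) ?_
        · exact .of_forall fun z => mul_nonneg (hf01 _).1 (Real.exp_pos _).le
        · exact .of_forall fun z => mul_exp_neg_card_mismatches_le hε hδ hf z
    _ = (∫ z, f (Y z) ∂Measure.pi π) + δ / (Real.exp ε - 1) := by
        rw [integral_add hY_integrable (integrable_const _)]
        simp

end GroupPrivacy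

section DifferentialPrivacy

variable {Ω Θ : Type*} [MeasurableSpace Ω] [MeasurableSpace Θ]

lemma measureReal_bind_apply {P : Measure Ω} {A : Ω → Measure Θ} [∀ x, IsFiniteMeasure (A x)]
    (hA : Measurable A) {E : Set Θ} (hE : MeasurableSet E) :
    (P.bind A).real E = ∫ x, (A x).real E ∂P := by
  rw [Measure.real, Measure.bind_apply hE hA.aemeasurable]
  exact (integral_toReal ((Measure.measurable_coe hE).comp hA).aemeasurable
    (.of_forall fun _ => measure_lt_top _ _)).symm

variable {n : ℕ} {A : (Fin n → Ω) → Measure Θ} {ε δ : ℝ} {E : Set Θ}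

lemma IsDP.measureReal_le [∀ x, IsFiniteMeasure (A x)] (hdp : IsDP n A ε δ) (hδ : 0 ≤ δ)
    (hE : MeasurableSet E) {x x' : Fin n → Ω} (hx : AreNeighbors x x') :
    (A x).real E ≤ Real.exp ε * (A x').real E + δ := by
  have h := ENNReal.toReal_mono (by finiteness) (hdp x x' hx E hE)
  rwa [ENNReal.toReal_add (by finiteness) (by finiteness), ENNReal.toReal_mul,
    ENNReal.toReal_ofReal (Real.exp_pos ε).le, ENNReal.toReal_ofReal hδ] at h

lemma IsDP.exp_neg_div_two_sub_le_measureReal_bind [∀ x, IsProbabilityMeasure (A x)]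
    (hdp : IsDP n A ε δ) (hA : Measurable A) (hε : 0 < ε) (hδ : 0 ≤ δ)
    {μ ν : Fin n → Measure Ω} [∀ k, IsProbabilityMeasure (μ k)]
    [∀ k, IsProbabilityMeasure (ν k)] {t : ℝ} (htv : ∑ k, tvDist (μ k) (ν k) ≤ t)
    (hE : MeasurableSet E) (hμ : 1 / 2 ≤ ((Measure.pi μ).bind A).real E) :
    Real.exp (-(2 * ε * t)) / 2 - δ / (Real.exp ε - 1) ≤ ((Measure.pi ν).bind A).real E := by
  rw [measureReal_bind_apply hA hE] at hμ ⊢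
  set p := ∫ x, (A x).real E ∂Measure.pi μ
  have hcouple := integral_mul_exp_neg_sum_tvDist_div_le μ ν hε hδ
    ((Measure.measurable_coe hE).comp hA).ennreal_toReal
    (fun x => ⟨measureReal_nonneg, measureReal_le_one⟩)
    fun x x' hx => hdp.measureReal_le (E := E) hδ hE hx
  have hexponent : ε * (∑ k, tvDist (μ k) (ν k)) / p ≤ 2 * ε * t := by
    have h0 : 0 ≤ ∑ k, tvDist (μ k) (ν k) := Finset.sum_nonneg fun _ _ => tvDist_nonneg _ _
    calc ε * (∑ k, tvDist (μ k) (ν k)) / p ≤ ε * (∑ k, tvDist (μ k) (ν k)) / (1 / 2) := by gcongr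
      _ = 2 * ε * ∑ k, tvDist (μ k) (ν k) := by ring
      _ ≤ 2 * ε * t := by gcongr
  rw [sub_le_iff_le_add]
  calc Real.exp (-(2 * ε * t)) / 2 = 1 / 2 * Real.exp (-(2 * ε * t)) := by ring
    _ ≤ p * Real.exp (-(ε * (∑ k, tvDist (μ k) (ν k)) / p)) := by gcongr
    _ ≤ _ := hcouple

end DifferentialPrivacy

lemma exists_min_mul_one_sub_le_two_mul_one_sub_diag {ι : Type*} [Fintype ι] [Nonempty ι]
    {p : ι → ι → ℝ} {K c : ℝ} (hK : 0 < K) (hc : 0 ≤ c) (hp0 : ∀ j i, 0 ≤ p j i)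
    (hp1 : ∀ j, ∑ i, p j i ≤ 1)
    (hp : ∀ i j, i ≠ j → 1 / 2 ≤ p i i → 1 / (2 * K) - c ≤ p j i) :
    ∃ i, min 1 ((Fintype.card ι - 1) / K) * (1 - 2 * c * K) ≤ 2 * (1 - p i i) := by
  classical
  set M := min 1 ((Fintype.card ι - 1) / K)
  have hcard : (1 : ℝ) ≤ Fintype.card ι := by exact_mod_cast Fintype.card_pos
  have hM0 : 0 ≤ M := le_min zero_le_one (div_nonneg (sub_nonneg.2 hcard) hK.le)
  have hM1 : M ≤ 1 := min_le_left _ _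
  have hdiag (i : ι) : p i i ≤ 1 :=
    (Finset.single_le_sum (fun k _ => hp0 i k) (Finset.mem_univ i)).trans (hp1 i)
  rcases le_total (1 - 2 * c * K) 0 with hneg | hpos
  · obtain ⟨i⟩ := ‹Nonempty ι›
    exact ⟨i, (mul_nonpos_of_nonneg_of_nonpos hM0 hneg).trans (by linarith [hdiag i])⟩
  by_cases hhalf : ∃ i, p i i ≤ 1 / 2
  · obtain ⟨i, hi⟩ := hhalf
    have hF : 1 - 2 * c * K ≤ 1 := sub_le_self _ (by positivity)
    exact ⟨i, (mul_le_one₀ hM1 hpos hF).trans (by linarith)⟩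
  push Not at hhalf
  obtain ⟨j⟩ := ‹Nonempty ι›
  refine ⟨j, ?_⟩
  have hoff : (Fintype.card ι - 1) * (1 / (2 * K) - c) ≤ ∑ i ∈ Finset.univ.erase j, p j i := by
    have h := Finset.card_nsmul_le_sum (Finset.univ.erase j) (p j) _ fun i hi =>
      hp i j (Finset.ne_of_mem_erase hi) (hhalf i).le
    rwa [nsmul_eq_mul, Finset.cast_card_erase_of_mem (Finset.mem_univ j), Finset.card_univ] at h
  have hrow := hp1 j
  rw [← Finset.add_sum_erase _ _ (Finset.mem_univ j)] at hrow
  calc M * (1 - 2 * c * K) ≤ (Fintype.card ι - 1) / K * (1 - 2 * c * K) := by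
        gcongr; exact min_le_right _ _
    _ = 2 * ((Fintype.card ι - 1) * (1 / (2 * K) - c)) := by field_simp
    _ ≤ 2 * (1 - p j j) := by linarith

lemma ofReal_mul_one_sub_measureReal_ball_le_lintegral_dist {Θ : Type*} [MeasurableSpace Θ]
    [PseudoMetricSpace Θ] [OpensMeasurableSpace Θ] (Q : Measure Θ) [IsProbabilityMeasure Q]
    (a : Θ) (r : ℝ) :
    ENNReal.ofReal (r * (1 - Q.real (Metric.ball a r))) ≤
      ∫⁻ b, ENNReal.ofReal (dist b a) ∂Q := by
  have hball : (Metric.ball a r)ᶜ ⊆ {b | ENNReal.ofReal r ≤ ENNReal.ofReal (dist b a)} :=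
    fun b hb => ENNReal.ofReal_le_ofReal (by simpa using hb)
  rw [← probReal_compl_eq_one_sub Metric.isOpen_ball.measurableSet,
    ENNReal.ofReal_mul' measureReal_nonneg, ofReal_measureReal]
  calc _ ≤ ENNReal.ofReal r * Q {b | ENNReal.ofReal r ≤ ENNReal.ofReal (dist b a)} := by gcongr
    _ ≤ _ := mul_meas_ge_le_lintegral
        (continuous_id.dist continuous_const).measurable.ennreal_ofReal _

lemma exists_ofReal_le_lintegral_dist_of_separated {ι Θ : Type*} [Fintype ι] [Nonempty ι]
    [MeasurableSpace Θ] [PseudoMetricSpace Θ] [OpensMeasurableSpace Θ] {θ : ι → Θ}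
    {Q : ι → Measure Θ} [∀ j, IsProbabilityMeasure (Q j)] {r K c : ℝ} (hr : 0 ≤ r) (hK : 0 < K)
    (hc : 0 ≤ c) (hsep : ∀ i j, i ≠ j → r ≤ dist (θ i) (θ j))
    (htest : ∀ i j, i ≠ j → 1 / 2 ≤ (Q i).real (Metric.ball (θ i) (r / 2)) →
      1 / (2 * K) - c ≤ (Q j).real (Metric.ball (θ i) (r / 2))) :
    ∃ i, ENNReal.ofReal (r / 4 * min 1 ((Fintype.card ι - 1) / K) * (1 - 2 * c * K)) ≤
      ∫⁻ a, ENNReal.ofReal (dist a (θ i)) ∂Q i := by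
  have hdisj : Pairwise (Function.onFun Disjoint fun i => Metric.ball (θ i) (r / 2)) :=
    fun i j hij => Metric.ball_disjoint_ball (by linarith [hsep i j hij])
  have hrow (j : ι) : ∑ i, (Q j).real (Metric.ball (θ i) (r / 2)) ≤ 1 :=
    (sum_measureReal_le_measureReal_univ (fun _ _ => Metric.isOpen_ball.measurableSet)
      (hdisj.set_pairwise _)).trans_eq probReal_univ
  obtain ⟨i, hi⟩ := exists_min_mul_one_sub_le_two_mul_one_sub_diag hK hc
    (fun _ _ => measureReal_nonneg) hrow htest
  have hbound : r / 4 * min 1 ((Fintype.card ι - 1) / K) * (1 - 2 * c * K) ≤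
      r / 2 * (1 - (Q i).real (Metric.ball (θ i) (r / 2))) := by
    linear_combination r / 4 * hi
  exact ⟨i, (ENNReal.ofReal_le_ofReal hbound).trans
    (ofReal_mul_one_sub_measureReal_ball_le_lintegral_dist (Q i) (θ i) (r / 2))⟩

theorem dp_fano_privacy_lower_bound_general {ι Ω Θ : Type*} [Fintype ι] [Nonempty ι]
    [MeasurableSpace Ω] [MeasurableSpace Θ] [PseudoMetricSpace Θ] [OpensMeasurableSpace Θ]
    (n : ℕ) (θ : ι → Θ) (μ : ι → Fin n → Measure Ω) [∀ i k, IsProbabilityMeasure (μ i k)]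
    (ρ₀ t₀ ε δ : ℝ) (hρ₀ : 0 ≤ ρ₀) (hε : 0 < ε) (hδ : 0 ≤ δ)
    (hsep : ∀ i j, i ≠ j → ρ₀ ≤ dist (θ i) (θ j))
    (htv : ∀ i j, i ≠ j → ∑ k, tvDist (μ i k) (μ j k) ≤ t₀)
    (A : (Fin n → Ω) → Measure Θ) (hA : ∀ x, IsProbabilityMeasure (A x))
    (hmeas : ∀ E : Set Θ, MeasurableSet E → Measurable fun x => A x E)
    (hdp : IsDP n A ε δ) :
    ENNReal.ofReal (ρ₀ / 4 * min 1 (((Fintype.card ι : ℝ) - 1) / Real.exp (2 * ε * t₀)) *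
        (1 - 2 * δ * Real.exp (2 * ε * t₀) / (Real.exp ε - 1))) ≤
      ⨆ i, ∫⁻ x, (∫⁻ a, ENNReal.ofReal (dist a (θ i)) ∂A x) ∂Measure.pi (μ i) := by
  have hA_meas : Measurable A := Measure.measurable_of_measurable_coe A hmeas
  let Q (j : ι) : Measure Θ := (Measure.pi (μ j)).bind A
  have (j : ι) : IsProbabilityMeasure (Q j) :=
    isProbabilityMeasure_bind hA_meas.aemeasurable (.of_forall hA)
  obtain ⟨i, hi⟩ := exists_ofReal_le_lintegral_dist_of_separated (Q := Q) hρ₀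
    (Real.exp_pos (2 * ε * t₀)) (div_nonneg hδ (sub_pos.2 (Real.one_lt_exp_iff.2 hε)).le) hsep
    fun i j hij hhalf => by
      rw [one_div, mul_inv_rev, ← Real.exp_neg, ← div_eq_mul_inv]
      exact hdp.exp_neg_div_two_sub_le_measureReal_bind hA_meas hε hδ (htv i j hij)
        Metric.isOpen_ball.measurableSet hhalf
  have hrisk : ∫⁻ a, ENNReal.ofReal (dist a (θ i)) ∂Q i =
      ∫⁻ x, (∫⁻ a, ENNReal.ofReal (dist a (θ i)) ∂A x) ∂Measure.pi (μ i) :=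
    Measure.lintegral_bind hA_meas.aemeasurable
      (continuous_id.dist continuous_const).measurable.ennreal_ofReal.aemeasurable
  rw [mul_div_right_comm, mul_div_assoc 2 δ]
  exact hi.trans (hrisk.trans_le (le_iSup (fun i =>
    ∫⁻ x, (∫⁻ a, ENNReal.ofReal (dist a (θ i)) ∂A x) ∂Measure.pi (μ i)) i))

/-- DP Fano lower bound (privacy term): for product measures `P_i = μ_i^{(1)}×⋯×μ_i^{(n)}`
with parameters `θ(P_i)` satisfying `ρ(θ(P_i), θ(P_j)) ≥ ρ₀` and
`Σ_k TV(μ_i^{(k)}, μ_j^{(k)}) ≤ t₀` for `i ≠ j`, every `(ε,δ)`-DP algorithm `A` has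
maximal risk `sup_i E[ρ(A, θ(P_i))] ≥ (ρ₀/4)·min{1, (N−1)/e^{4εt₀}}·(1 − 2δe^{4εt₀}/(e^ε−1))`. -/
theorem dp_fano_privacy_lower_bound {Ω Θ : Type*} [MeasurableSpace Ω]
    [MeasurableSpace Θ] [PseudoMetricSpace Θ] [OpensMeasurableSpace Θ]
    (N n : ℕ) (hN : 0 < N) (θ : Fin N → Θ) (μ : Fin N → Fin n → Measure Ω)
    [∀ i k, IsProbabilityMeasure (μ i k)]
    (ρ₀ t₀ ε δ : ℝ) (hρ₀ : 0 < ρ₀) (ht₀ : 0 < t₀) (hε : 0 < ε) (hδ0 : 0 ≤ δ) (hδ1 : δ < 1)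
    (hsep : ∀ i j : Fin N, i ≠ j → ρ₀ ≤ dist (θ i) (θ j))
    (htv : ∀ i j : Fin N, i ≠ j → ∑ k, tvDist (μ i k) (μ j k) ≤ t₀)
    (A : (Fin n → Ω) → Measure Θ) (hA : ∀ x, IsProbabilityMeasure (A x))
    (hmeas : ∀ E : Set Θ, MeasurableSet E → Measurable fun x => A x E)
    (hdp : IsDP n A ε δ) :
    ENNReal.ofReal (ρ₀ / 4 * min 1 (((N : ℝ) - 1) / Real.exp (4 * ε * t₀)) *
        (1 - 2 * δ * Real.exp (4 * ε * t₀) / (Real.exp ε - 1))) ≤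
      ⨆ i : Fin N,
        ∫⁻ x, (∫⁻ a, ENNReal.ofReal (dist a (θ i)) ∂A x) ∂Measure.pi (μ i) := by
  have := Fin.pos_iff_nonempty.1 hN
  have h := dp_fano_privacy_lower_bound_general n θ μ ρ₀ (2 * t₀) ε δ hρ₀.le hε hδ0 hsep
    (fun i j hij => (htv i j hij).trans (by linarith)) A hA hmeas hdp
  rwa [Fintype.card_fin, show 2 * ε * (2 * t₀) = 4 * ε * t₀ by ring] at h
end
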